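/- Let n ≥ 1, m > n, let p ∈ P^log(ℝ^n) with p⁺ = p_∞ < ∞, and let r : ℝ^n → [1,∞) be measurable with r⁺ ≤ p⁺. Define σ(t) = (1/r⁻ − 1/p_∞)·(1 + (1/p_∞)·(1/r⁻ − 1/r⁺)/((1 + 1/p_∞ − 1/r⁻)(1 + 1/p_∞ − 1/r⁺))) for 0 < t ≤ 1, and σ(t) = (1/r⁺ − 1/p_∞)·(1 − (1/p_∞)·(1/r⁻ − 1/r⁺)/((1 + 1/p_∞ − 1/r⁻)(1 + 1/p_∞ − 1/r⁺))) for t > 1. Then there exists a constant C > 0 such that for every t > 0 and every f ∈ L^{r(·)}(ℝ^n), ‖η_{t,m} * f‖_{L^{p(·)}(ℝ^n)} ≤ C t^{−nσ(t)} ‖f‖_{L^{r(·)}(ℝ^n)}. -/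

import Mathlib

open MeasureTheory Filter Real
open scoped ENNReal

noncomputable section

/-- Euclidean space `ℝⁿ`. -/
abbrev Esp (n : ℕ) := EuclideanSpace ℝ (Fin n)

/-- The variable exponent modular `ρ_{p(·)}(f) = ∫_{ℝⁿ} |f(x)|^{p(x)} dx`. -/
def vMod (n : ℕ) (p : Esp n → ℝ) (f : Esp n → ℝ) : ℝ≥0∞ :=
  ∫⁻ x, (ENNReal.ofReal |f x|) ^ (p x) ∂volume

/-- The Luxemburg norm `‖f‖_{L^{p(·)}} = inf {λ > 0 : ρ_{p(·)}(f/λ) ≤ 1}`. -/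
def luxNorm (n : ℕ) (p : Esp n → ℝ) (f : Esp n → ℝ) : ℝ :=
  sInf {lam : ℝ | 0 < lam ∧ vMod n p (fun x => f x / lam) ≤ 1}

/-- Membership in the variable exponent Lebesgue space `L^{p(·)}(ℝⁿ)`. -/
def MemVLp (n : ℕ) (p : Esp n → ℝ) (f : Esp n → ℝ) : Prop :=
  AEMeasurable f volume ∧ ∃ lam : ℝ, 0 < lam ∧ vMod n p (fun x => f x / lam) ≤ 1

/-- Global log-Hölder continuity of `1/p` with decay value `l` (representing `l = 1/p_∞`). -/
def IsLogHolder (n : ℕ) (p : Esp n → ℝ) (l : ℝ) : Prop :=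
  ∃ c : ℝ, 0 < c ∧
    (∀ x y : Esp n, |1 / p x - 1 / p y| ≤ c / Real.log (Real.exp 1 + 1 / ‖x - y‖)) ∧
    (∀ x : Esp n, |1 / p x - l| ≤ c / Real.log (Real.exp 1 + ‖x‖))

/-- The kernel `η_{t,m}(x) = t^{-n} (1 + |x|/t)^{-m}`. -/
def etaKer (n : ℕ) (t m : ℝ) (x : Esp n) : ℝ :=
  t ^ (-(n : ℝ)) * (1 + ‖x‖ / t) ^ (-m)

/-- Convolution `(u * v)(x) = ∫ u(x - y) v(y) dy`. -/
def convR (n : ℕ) (u v : Esp n → ℝ) (x : Esp n) : ℝ :=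
  ∫ y, u (x - y) * v y ∂volume

/-!
Splitting `f` at `|f| = 1` embeds `L^{r(·)}` into `L^{r⁻} + L^{r⁺}`. The kernels scale as
`‖η_{t,m}‖_s = t^{-n(1 - 1/s)} ‖η_{1,m}‖_s`, so Young's convolution inequality maps the two pieces
into `L^{p_∞}` with factors `t^{-n(1/r⁻ - 1/p_∞)}` and `t^{-n(1/r⁺ - 1/p_∞)}`. Since `p ≤ p_∞` and
`1/p - 1/p_∞` decays logarithmically at infinity, weighted AM-GM against the integrable weight
`(e + |x|)^{-(n+1)}` embeds `L^{p_∞}` into `L^{p(·)}`. The correction factor in `σ` only increases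
`t^{-nσ(t)}`, so the bound by the larger of the two powers implies the theorem.
-/

lemma rpow_rpow_mul_rpow_rpow_sub (a : ℝ≥0∞) {p u : ℝ} (hp : 0 < p) (hu : 0 ≤ u)
    (hup : 0 ≤ 1 / p - u) : (a ^ p) ^ u * (a ^ p) ^ (1 / p - u) = a := by
  rw [← ENNReal.rpow_add_of_nonneg _ _ hu hup, add_sub_cancel, ← ENNReal.rpow_mul,
    mul_one_div_cancel hp.ne', ENNReal.rpow_one]

lemma rpow_mul_rpow_one_sub_le_add (a b : ℝ≥0∞) {θ : ℝ} (h₀ : 0 ≤ θ) (h₁ : θ ≤ 1) :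
    a ^ θ * b ^ (1 - θ) ≤ a + b := by
  have h₁' : 0 ≤ 1 - θ := sub_nonneg.2 h₁
  calc a ^ θ * b ^ (1 - θ) ≤ (a + b) ^ θ * (a + b) ^ (1 - θ) := by
        gcongr <;> simp
    _ = a + b := by
        rw [← ENNReal.rpow_add_of_nonneg _ _ h₀ h₁', add_sub_cancel, ENNReal.rpow_one]

lemma exp_mul_rpow_le_rpow_add_exp (a : ℝ≥0∞) {p P c K L : ℝ} (hp : 0 < p) (hpP : p ≤ P)
    (hK : 0 ≤ K) (hL : 0 < L) (hc : 1 / p - 1 / P ≤ c / L) :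
    (ENNReal.ofReal (exp (-(c * K))) * a) ^ p ≤ a ^ P + ENNReal.ofReal (exp (-(K * L))) := by
  have hP : 0 < P := hp.trans_le hpP
  have hexp : exp (-(c * K)) ^ p ≤ exp (-(K * L)) ^ (1 - p / P) := by
    have hcL : L * (1 - p / P) ≤ p * c := by
      have h := (le_div_iff₀ hL).1 hc
      calc L * (1 - p / P) = p * ((1 / p - 1 / P) * L) := by field_simp
        _ ≤ p * c := by gcongr
    rw [← exp_mul, ← exp_mul, exp_le_exp]
    linarith [mul_le_mul_of_nonneg_left hcL hK]
  calc (ENNReal.ofReal (exp (-(c * K))) * a) ^ p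
      = ENNReal.ofReal (exp (-(c * K)) ^ p) * (a ^ P) ^ (p / P) := by
        rw [ENNReal.mul_rpow_of_nonneg _ _ hp.le,
          ENNReal.ofReal_rpow_of_nonneg (exp_pos _).le hp.le, ← ENNReal.rpow_mul,
          mul_div_cancel₀ p hP.ne']
    _ ≤ ENNReal.ofReal (exp (-(K * L))) ^ (1 - p / P) * (a ^ P) ^ (p / P) := by
        rw [ENNReal.ofReal_rpow_of_pos (exp_pos _)]
        gcongr
    _ ≤ a ^ P + ENNReal.ofReal (exp (-(K * L))) := by
        rw [mul_comm]
        exact rpow_mul_rpow_one_sub_le_add _ _ (by positivity) ((div_le_one hP).2 hpP)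

lemma max_rpow_le_rpow_ite {t N α β Q : ℝ} (ht : 0 < t) (hN : 0 ≤ N) (hβ : 0 ≤ β) (hβα : β ≤ α)
    (hQ : 0 ≤ Q) :
    max (t ^ (-N * α)) (t ^ (-N * β)) ≤
      t ^ (-N * (if t ≤ 1 then α * (1 + Q) else β * (1 - Q))) := by
  have hα : α ≤ α * (1 + Q) := le_mul_of_one_le_right (hβ.trans hβα) (by linarith)
  have hβ' : β * (1 - Q) ≤ β := mul_le_of_le_one_right hβ (by linarith)
  split_ifs with h
  · have hanti {e : ℝ} (he : e ≤ α * (1 + Q)) : t ^ (-N * e) ≤ t ^ (-N * (α * (1 + Q))) :=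
      rpow_le_rpow_of_exponent_ge ht h (mul_le_mul_of_nonpos_left he (neg_nonpos.2 hN))
    exact max_le (hanti hα) (hanti (hβα.trans hα))
  · have hmono {e : ℝ} (he : β * (1 - Q) ≤ e) : t ^ (-N * e) ≤ t ^ (-N * (β * (1 - Q))) :=
      rpow_le_rpow_of_exponent_le (not_le.1 h).le
        (mul_le_mul_of_nonpos_left he (neg_nonpos.2 hN))
    exact max_le (hmono (hβ'.trans hβα)) (hmono hβ')

lemma mul_sub_div_mul_nonneg {l a b : ℝ} (hl : 0 ≤ l) (hba : b ≤ a) (ha : a ≤ 1) :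
    0 ≤ l * ((a - b) / ((1 + l - a) * (1 + l - b))) := by
  have h (e : ℝ) (he : e ≤ 1) : 0 ≤ 1 + l - e := by linarith
  exact mul_nonneg hl (div_nonneg (sub_nonneg.2 hba) (mul_nonneg (h a ha) (h b (hba.trans ha))))

lemma max_rpow_le_rpow_ite_correction {t N l a b : ℝ} (ht : 0 < t) (hN : 0 ≤ N) (hl : 0 ≤ l)
    (hlb : l ≤ b) (hba : b ≤ a) (ha : a ≤ 1) :
    max (t ^ (-N * (a - l))) (t ^ (-N * (b - l))) ≤
      t ^ (-N * (if t ≤ 1 then (a - l) * (1 + l * ((a - b) / ((1 + l - a) * (1 + l - b))))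
        else (b - l) * (1 - l * ((a - b) / ((1 + l - a) * (1 + l - b)))))) :=
  max_rpow_le_rpow_ite ht hN (sub_nonneg.2 hlb) (sub_le_sub_right hba l)
    (mul_sub_div_mul_nonneg hl hba ha)

section EssentialBounds

variable {α β : Type*} [MeasurableSpace α] {μ : Measure α} [ConditionallyCompleteLinearOrder β]
  {f : α → β} {a : β}

lemma le_essInf_of_isBoundedUnder [NeZero μ] (ha : ∀ᵐ x ∂μ, a ≤ f x)
    (hf : IsBoundedUnder (· ≤ ·) (ae μ) f) : a ≤ essInf f μ :=
  le_liminf_of_le hf.isCoboundedUnder_ge ha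

lemma ae_mem_Icc_essInf_essSup [TopologicalSpace β] [FirstCountableTopology β] [OrderTopology β]
    (hbelow : IsBoundedUnder (· ≥ ·) (ae μ) f) (habove : IsBoundedUnder (· ≤ ·) (ae μ) f) :
    ∀ᵐ x ∂μ, f x ∈ Set.Icc (essInf f μ) (essSup f μ) := by
  filter_upwards [ae_essInf_le hbelow, ae_le_essSup habove] with x h₁ h₂ using ⟨h₁, h₂⟩

end EssentialBounds

section LpNorm

variable {α ε : Type*} [MeasurableSpace α] {μ : Measure α} [ENorm ε] {f : α → ε} {p : ℝ}

lemma eLpNorm_ofReal_rpow_eq_lintegral (hp : 0 < p) :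
    eLpNorm f (ENNReal.ofReal p) μ ^ p = ∫⁻ x, ‖f x‖ₑ ^ p ∂μ := by
  have := eLpNorm_nnreal_pow_eq_lintegral (μ := μ) (f := f) (Real.toNNReal_pos.2 hp).ne'
  rwa [Real.coe_toNNReal p hp.le] at this

lemma eLpNorm_ofReal_le_iff_lintegral_le (hp : 0 < p) {C : ℝ≥0∞} :
    eLpNorm f (ENNReal.ofReal p) μ ≤ C ↔ ∫⁻ x, ‖f x‖ₑ ^ p ∂μ ≤ C ^ p := by
  rw [← eLpNorm_ofReal_rpow_eq_lintegral hp, ENNReal.rpow_le_rpow_iff hp]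

lemma lintegral_rpow_rpow_mul_lintegral_rpow {f : α → ℝ≥0∞} {s : ℝ} (hp : 0 < p) (hs : 0 < s)
    (hps : 0 ≤ 1 / p - 1 / s) :
    ((∫⁻ x, f x ^ p ∂μ) ^ (1 / p - 1 / s)) ^ s * ∫⁻ x, f x ^ p ∂μ =
      eLpNorm f (ENNReal.ofReal p) μ ^ s := by
  have hnorm := eLpNorm_ofReal_rpow_eq_lintegral (μ := μ) (f := f) hp
  simp only [enorm_eq_self] at hnorm
  have hroot : ∫⁻ x, f x ^ p ∂μ = ((∫⁻ x, f x ^ p ∂μ) ^ (1 / s)) ^ s := by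
    rw [← ENNReal.rpow_mul, one_div_mul_cancel hs.ne', ENNReal.rpow_one]
  conv_lhs => enter [2]; rw [hroot]
  rw [← ENNReal.mul_rpow_of_nonneg _ _ hs.le, mul_comm, ← hnorm,
    rpow_rpow_mul_rpow_rpow_sub _ hp (by positivity) hps]

end LpNorm

lemma eLpNorm_comp_smul {E ε : Type*} [NormedAddCommGroup E] [NormedSpace ℝ E]
    [FiniteDimensional ℝ E] [MeasurableSpace E] [BorelSpace E] [TopologicalSpace ε]
    [ContinuousENorm ε] {μ : Measure E} [μ.IsAddHaarMeasure] {R p : ℝ} (hR : R ≠ 0) (hp : 0 < p)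
    (f : E → ε) :
    eLpNorm (fun x => f (R • x)) (ENNReal.ofReal p) μ =
      ENNReal.ofReal (|R| ^ (-(Module.finrank ℝ E / p))) * eLpNorm f (ENNReal.ofReal p) μ := by
  have hmap := (measurableEmbedding_const_smul₀ (α := E) hR).eLpNorm_map_measure
    (p := ENNReal.ofReal p) (μ := μ) (g := f)
  rw [Measure.map_addHaar_smul μ hR,
    eLpNorm_smul_measure_of_ne_top ENNReal.ofReal_ne_top] at hmap
  have hexp : (1 / ENNReal.ofReal p).toReal = 1 / p := by
    simp [ENNReal.toReal_ofReal hp.le]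
  change eLpNorm (f ∘ fun x => R • x) _ μ = _
  rw [← hmap, hexp, smul_eq_mul, ENNReal.ofReal_rpow_of_nonneg (by positivity) (by positivity),
    abs_inv, abs_pow, ← Real.rpow_natCast, ← Real.rpow_neg (abs_nonneg R),
    ← Real.rpow_mul (abs_nonneg R)]
  congr 3
  ring

section Young

variable {G : Type*} [AddGroup G] [MeasurableSpace G] [MeasurableAdd₂ G] [MeasurableNeg G]
  {μ : Measure G} [SFinite μ] [μ.IsAddLeftInvariant] {f f₁ f₂ g : G → ℝ≥0∞}

lemma add_lconvolution (hf₁ : AEMeasurable f₁ μ) (hg : AEMeasurable g μ) :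
    (f₁ + f₂) ⋆ₗ[μ] g = (f₁ ⋆ₗ[μ] g) + (f₂ ⋆ₗ[μ] g) := by
  ext x
  simp only [lconvolution_def, Pi.add_apply, add_mul]
  exact lintegral_add_left' (by fun_prop) _

lemma lintegral_lconvolution (hf : AEMeasurable f μ) (hg : AEMeasurable g μ) :
    ∫⁻ x, (f ⋆ₗ[μ] g) x ∂μ = (∫⁻ x, f x ∂μ) * ∫⁻ x, g x ∂μ := by
  simp only [lconvolution_def]
  rw [lintegral_lintegral_swap (by fun_prop), ← lintegral_mul_const'' _ hf]
  refine lintegral_congr fun y => ?_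
  have hgy : AEMeasurable (fun x => g (-y + x)) μ :=
    hg.comp_quasiMeasurePreserving (measurePreserving_add_left μ (-y)).quasiMeasurePreserving
  rw [lintegral_const_mul'' _ hgy, lintegral_add_left_eq_self]

variable [μ.IsNegInvariant] {p q s : ℝ}

-- Hölder's inequality for the factorization
-- `f g = (f ^ p g ^ q) ^ (1/s) (f ^ p) ^ (1/p - 1/s) (g ^ q) ^ (1/q - 1/s)`.
lemma lconvolution_le_rpow_mul_rpow_mul_rpow (hf : AEMeasurable f μ) (hg : AEMeasurable g μ)
    (hp : 1 ≤ p) (hq : 1 ≤ q) (hs : 0 < s) (hpqs : 1 / p + 1 / q = 1 + 1 / s) (x : G) :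
    (f ⋆ₗ[μ] g) x ≤ (((f · ^ p) ⋆ₗ[μ] (g · ^ q)) x) ^ (1 / s) *
      (∫⁻ y, f y ^ p ∂μ) ^ (1 / p - 1 / s) * (∫⁻ y, g y ^ q ∂μ) ^ (1 / q - 1 / s) := by
  have hp' : 1 / p ≤ 1 := (div_le_one (by positivity)).2 hp
  have hq' : 1 / q ≤ 1 := (div_le_one (by positivity)).2 hq
  have hps : 0 ≤ 1 / p - 1 / s := by linarith
  have hqs : 0 ≤ 1 / q - 1 / s := by linarith
  have hs' : 0 ≤ 1 / s := by positivity
  have hfactor (y : G) : f y * g (-y + x) = (f y ^ p * g (-y + x) ^ q) ^ (1 / s) *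
      (f y ^ p) ^ (1 / p - 1 / s) * (g (-y + x) ^ q) ^ (1 / q - 1 / s) := by
    conv_lhs => rw [← rpow_rpow_mul_rpow_rpow_sub (f y) (by positivity) hs' hps,
      ← rpow_rpow_mul_rpow_rpow_sub (g (-y + x)) (by positivity) hs' hqs]
    rw [ENNReal.mul_rpow_of_nonneg _ _ hs']
    ring
  have htranslate : ∫⁻ y, g (-y + x) ^ q ∂μ = ∫⁻ y, g y ^ q ∂μ := by
    rw [← lintegral_add_left_eq_self _ x, ← lintegral_neg_eq_self]
    simp
  have hholder := ENNReal.lintegral_prod_norm_pow_le (μ := μ) Finset.univ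
    (f := ![fun y => f y ^ p * g (-y + x) ^ q, fun y => f y ^ p, fun y => g (-y + x) ^ q])
    (p := ![1 / s, 1 / p - 1 / s, 1 / q - 1 / s])
    (fun i _ => by fin_cases i <;> simp only [Fin.reduceFinMk, Matrix.cons_val] <;> fun_prop)
    (by simp only [Fin.sum_univ_three, Matrix.cons_val]; linarith)
    (fun i _ => by fin_cases i <;> assumption)
  simp only [Fin.prod_univ_three, Matrix.cons_val] at hholder
  rw [htranslate] at hholder
  simpa only [lconvolution_def, hfactor] using hholder

theorem eLpNorm_lconvolution_le (hf : AEMeasurable f μ) (hg : AEMeasurable g μ)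
    (hp : 1 ≤ p) (hq : 1 ≤ q) (hs : 0 < s) (hpqs : 1 / p + 1 / q = 1 + 1 / s) :
    eLpNorm (f ⋆ₗ[μ] g) (ENNReal.ofReal s) μ ≤
      eLpNorm f (ENNReal.ofReal p) μ * eLpNorm g (ENNReal.ofReal q) μ := by
  have hp0 : 0 < p := by positivity
  have hq0 : 0 < q := by positivity
  have hfp : AEMeasurable (f · ^ p) μ := hf.pow_const p
  have hgq : AEMeasurable (g · ^ q) μ := hg.pow_const q
  have hps : 0 ≤ 1 / p - 1 / s := by linarith [(div_le_one hq0).2 hq]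
  have hqs : 0 ≤ 1 / q - 1 / s := by linarith [(div_le_one hp0).2 hp]
  rw [eLpNorm_ofReal_le_iff_lintegral_le hs]
  calc ∫⁻ x, ‖(f ⋆ₗ[μ] g) x‖ₑ ^ s ∂μ
      ≤ ∫⁻ x, ((f · ^ p) ⋆ₗ[μ] (g · ^ q)) x * (((∫⁻ y, f y ^ p ∂μ) ^ (1 / p - 1 / s)) ^ s *
          ((∫⁻ y, g y ^ q ∂μ) ^ (1 / q - 1 / s)) ^ s) ∂μ := by
        refine lintegral_mono fun x => ?_
        grw [enorm_eq_self, lconvolution_le_rpow_mul_rpow_mul_rpow hf hg hp hq hs hpqs x]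
        rw [ENNReal.mul_rpow_of_nonneg _ _ hs.le, ENNReal.mul_rpow_of_nonneg _ _ hs.le,
          ← ENNReal.rpow_mul, one_div_mul_cancel hs.ne', ENNReal.rpow_one, mul_assoc]
    _ = (((∫⁻ y, f y ^ p ∂μ) ^ (1 / p - 1 / s)) ^ s * ∫⁻ y, f y ^ p ∂μ) *
          (((∫⁻ y, g y ^ q ∂μ) ^ (1 / q - 1 / s)) ^ s * ∫⁻ y, g y ^ q ∂μ) := by
        rw [lintegral_mul_const'' _ (aemeasurable_lconvolution hfp hgq),
          lintegral_lconvolution hfp hgq]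
        ring
    _ = (eLpNorm f (ENNReal.ofReal p) μ * eLpNorm g (ENNReal.ofReal q) μ) ^ s := by
        rw [lintegral_rpow_rpow_mul_lintegral_rpow hp0 hs hps,
          lintegral_rpow_rpow_mul_lintegral_rpow hq0 hs hqs, ENNReal.mul_rpow_of_nonneg _ _ hs.le]

end Young

section Decomposition

variable {α : Type*} [MeasurableSpace α] {μ : Measure α}

lemma exists_add_eq_lintegral_rpow_le {f : α → ℝ≥0∞} (hf : AEMeasurable f μ) {r : α → ℝ}
    {a b : ℝ} (ha : 0 < a) (hb : 0 < b) (hr : ∀ᵐ x ∂μ, r x ∈ Set.Icc a b) :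
    ∃ f₁ f₂ : α → ℝ≥0∞, AEMeasurable f₁ μ ∧ AEMeasurable f₂ μ ∧ f₁ + f₂ = f ∧
      ∫⁻ x, f₁ x ^ a ∂μ ≤ ∫⁻ x, f x ^ r x ∂μ ∧ ∫⁻ x, f₂ x ^ b ∂μ ≤ ∫⁻ x, f x ^ r x ∂μ := by
  set s : Set α := {x | 1 ≤ f x}
  have hs : NullMeasurableSet s μ := nullMeasurableSet_le aemeasurable_const hf
  refine ⟨s.indicator f, sᶜ.indicator f, hf.indicator₀ hs, hf.indicator₀ hs.compl,
    Set.indicator_self_add_compl s f, lintegral_mono_ae ?_, lintegral_mono_ae ?_⟩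
  · filter_upwards [hr] with x hx
    by_cases hfx : x ∈ s
    · rw [Set.indicator_of_mem hfx]
      exact ENNReal.rpow_le_rpow_of_exponent_le hfx hx.1
    · simp [Set.indicator_of_notMem hfx, ha]
  · filter_upwards [hr] with x hx
    by_cases hfx : x ∈ s
    · simp [Set.indicator_of_notMem (Set.notMem_compl_iff.2 hfx), hb]
    · rw [Set.indicator_of_mem hfx]
      exact ENNReal.rpow_le_rpow_of_exponent_ge (not_le.1 hfx).le hx.2

end Decomposition

lemma lintegral_exp_neg_mul_log_lt_top {E : Type*} [NormedAddCommGroup E] [NormedSpace ℝ E]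
    [FiniteDimensional ℝ E] [MeasurableSpace E] [BorelSpace E] (μ : Measure E)
    [μ.IsAddHaarMeasure] {K : ℝ} (hK : Module.finrank ℝ E < K) :
    ∫⁻ x : E, ENNReal.ofReal (exp (-(K * log (exp 1 + ‖x‖)))) ∂μ < ∞ := by
  refine lt_of_le_of_lt (lintegral_mono fun x => ENNReal.ofReal_le_ofReal ?_)
    (finite_integral_one_add_norm hK)
  have hK0 : 0 ≤ K := (Nat.cast_nonneg _).trans hK.le
  calc exp (-(K * log (exp 1 + ‖x‖))) = (exp 1 + ‖x‖) ^ (-K) := by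
        rw [rpow_def_of_pos (by positivity), mul_neg, mul_comm K]
    _ ≤ (1 + ‖x‖) ^ (-K) :=
        rpow_le_rpow_of_nonpos (by positivity) (by gcongr; exact one_le_exp zero_le_one)
          (neg_nonpos.2 hK0)

section VariableExponent

variable {n : ℕ} {p r : Esp n → ℝ} {f g : Esp n → ℝ} {P c : ℝ}

lemma vMod_div_le (hp : ∀ᵐ x, 1 ≤ p x) {M : ℝ} (hM : 1 ≤ M) (g : Esp n → ℝ) :
    vMod n p (fun x => g x / M) ≤ ENNReal.ofReal M⁻¹ * vMod n p g := by
  have hM' : ENNReal.ofReal M⁻¹ ≤ 1 := ENNReal.ofReal_le_one.2 (inv_le_one_of_one_le₀ hM)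
  unfold vMod
  rw [← lintegral_const_mul' _ _ ENNReal.ofReal_ne_top]
  refine lintegral_mono_ae ?_
  filter_upwards [hp] with x hx
  rw [div_eq_inv_mul, abs_mul, abs_of_pos (by positivity), ENNReal.ofReal_mul (by positivity),
    ENNReal.mul_rpow_of_nonneg _ _ (by positivity)]
  gcongr
  simpa using ENNReal.rpow_le_rpow_of_exponent_ge hM' hx

lemma vMod_exp_mul_le (hp : ∀ᵐ x, p x ∈ Set.Icc 1 P)
    (hdecay : ∀ᵐ x, 1 / p x - 1 / P ≤ c / log (exp 1 + ‖x‖)) {K : ℝ} (hK : 0 ≤ K)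
    (g : Esp n → ℝ) :
    vMod n p (fun x => exp (-(c * K)) * g x) ≤
      (∫⁻ x, ‖g x‖ₑ ^ P) + ∫⁻ x : Esp n, ENNReal.ofReal (exp (-(K * log (exp 1 + ‖x‖)))) := by
  rw [← lintegral_add_right _ (by fun_prop)]
  refine lintegral_mono_ae ?_
  filter_upwards [hp, hdecay] with x hx hdx
  have hlog : 0 < log (exp 1 + ‖x‖) :=
    log_pos (lt_add_of_lt_of_nonneg (one_lt_exp_iff.2 one_pos) (norm_nonneg x))
  rw [abs_mul, abs_exp, ENNReal.ofReal_mul (exp_pos _).le, ← Real.enorm_eq_ofReal_abs]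
  exact exp_mul_rpow_le_rpow_add_exp _ (one_pos.trans_le hx.1) hx.2 hK hlog hdx

lemma exists_vMod_div_le_one_of_eLpNorm_le (hp : ∀ᵐ x, p x ∈ Set.Icc 1 P)
    (hdecay : ∀ᵐ x, 1 / p x - 1 / P ≤ c / log (exp 1 + ‖x‖)) :
    ∃ C : ℝ, 0 < C ∧ ∀ (g : Esp n → ℝ) (K : ℝ), 0 < K →
      eLpNorm g (ENNReal.ofReal P) volume ≤ ENNReal.ofReal K →
      vMod n p (fun x => g x / (C * K)) ≤ 1 := by
  obtain ⟨x₀, hx₀⟩ := hp.exists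
  have hP : 0 < P := one_pos.trans_le (hx₀.1.trans hx₀.2)
  set W := ∫⁻ x : Esp n, ENNReal.ofReal (exp (-((n + 1) * log (exp 1 + ‖x‖))))
  have hWtop : W ≠ ∞ := (lintegral_exp_neg_mul_log_lt_top volume (by simp)).ne
  set M : ℝ := 1 + W.toReal
  have hM : 1 ≤ M := le_add_of_nonneg_right ENNReal.toReal_nonneg
  refine ⟨M / exp (-(c * (n + 1))), by positivity, fun g K hK hg => ?_⟩
  have hgK : ∫⁻ x, ‖g x / K‖ₑ ^ P ≤ 1 := by
    have hnorm : eLpNorm (K⁻¹ • g) (ENNReal.ofReal P) volume ≤ 1 := by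
      grw [eLpNorm_const_smul_le, hg, Real.enorm_of_nonneg (by positivity),
        ← ENNReal.ofReal_mul (by positivity), inv_mul_cancel₀ hK.ne', ENNReal.ofReal_one]
    simpa [eLpNorm_ofReal_le_iff_lintegral_le hP, div_eq_inv_mul] using hnorm
  calc vMod n p (fun x => g x / (M / exp (-(c * (n + 1))) * K))
      = vMod n p (fun x => exp (-(c * (n + 1))) * (g x / K) / M) := by
        congr 1 with x
        field_simp
    _ ≤ ENNReal.ofReal M⁻¹ * vMod n p (fun x => exp (-(c * (n + 1))) * (g x / K)) :=
        vMod_div_le (hp.mono fun _ hx => hx.1) hM _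
    _ ≤ ENNReal.ofReal M⁻¹ * (1 + W) := by
        grw [vMod_exp_mul_le hp hdecay (by positivity) (fun x => g x / K), hgK]
    _ = ENNReal.ofReal M⁻¹ * ENNReal.ofReal M := by
        rw [ENNReal.ofReal_add zero_le_one ENNReal.toReal_nonneg, ENNReal.ofReal_one,
          ENNReal.ofReal_toReal hWtop]
    _ = 1 := by
        rw [← ENNReal.ofReal_mul (by positivity), inv_mul_cancel₀ (by positivity),
          ENNReal.ofReal_one]

lemma luxNorm_nonneg : 0 ≤ luxNorm n p f := Real.sInf_nonneg fun _ h => h.1.le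

lemma luxNorm_le_mul_luxNorm (hf : MemVLp n r f) {K : ℝ} (hK : 0 < K)
    (h : ∀ lam : ℝ, 0 < lam → vMod n r (fun x => f x / lam) ≤ 1 →
      vMod n p (fun x => g x / (K * lam)) ≤ 1) :
    luxNorm n p g ≤ K * luxNorm n r f := by
  rw [← div_le_iff₀' hK]
  refine le_csInf hf.2 fun lam hlam => ?_
  rw [div_le_iff₀' hK]
  exact csInf_le ⟨0, fun _ h => h.1.le⟩ ⟨mul_pos hK hlam.1, h lam hlam.1 hlam.2⟩

end VariableExponent

section Kernel

variable {n : ℕ} {m t : ℝ}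

lemma etaKer_eq_mul_etaKer_one_smul (ht : 0 < t) :
    etaKer n t m = t ^ (-(n : ℝ)) • fun x => etaKer n 1 m (t⁻¹ • x) := by
  ext x
  simp [etaKer, norm_smul, abs_of_pos ht, div_eq_inv_mul]

@[fun_prop]
lemma measurable_etaKer : Measurable (etaKer n t m) := by
  unfold etaKer
  fun_prop

lemma eLpNorm_etaKer (ht : 0 < t) {s : ℝ} (hs : 0 < s) :
    eLpNorm (etaKer n t m) (ENNReal.ofReal s) volume =
      ENNReal.ofReal (t ^ (-(n : ℝ) * (1 - 1 / s))) *
        eLpNorm (etaKer n 1 m) (ENNReal.ofReal s) volume := by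
  rw [etaKer_eq_mul_etaKer_one_smul ht, eLpNorm_const_smul, eLpNorm_comp_smul (by positivity) hs,
    abs_of_pos (inv_pos.2 ht),
    Real.enorm_of_nonneg (by positivity), ← mul_assoc, ← ENNReal.ofReal_mul (by positivity),
    finrank_euclideanSpace_fin, inv_rpow ht.le, ← rpow_neg ht.le, ← rpow_add ht]
  congr 3
  ring

lemma eLpNorm_etaKer_one_lt_top {s : ℝ} (hs : 0 < s) (hms : n < m * s) :
    eLpNorm (etaKer n 1 m) (ENNReal.ofReal s) volume < ∞ := by
  rw [eLpNorm_lt_top_iff_lintegral_rpow_enorm_lt_top (by simpa) ENNReal.ofReal_ne_top,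
    ENNReal.toReal_ofReal hs.le]
  have hpow (x : Esp n) : ‖etaKer n 1 m x‖ₑ ^ s = ENNReal.ofReal ((1 + ‖x‖) ^ (-(m * s))) := by
    rw [etaKer, one_rpow, one_mul, div_one, Real.enorm_of_nonneg (by positivity),
      ENNReal.ofReal_rpow_of_nonneg (by positivity) hs.le, ← rpow_mul (by positivity), neg_mul]
  simpa only [hpow] using finite_integral_one_add_norm (E := Esp n) (μ := volume) (by simpa)

lemma enorm_convR_le (u v : Esp n → ℝ) (x : Esp n) :
    ‖convR n u v x‖ₑ ≤ ((‖v ·‖ₑ) ⋆ₗ (‖u ·‖ₑ)) x := by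
  refine (enorm_integral_le_lintegral_enorm _).trans_eq ?_
  simp only [lconvolution_def, enorm_mul, neg_add_eq_sub, mul_comm]

lemma convR_div_const (u v : Esp n → ℝ) (a : ℝ) (x : Esp n) :
    convR n u (fun y => v y / a) x = convR n u v x / a := by
  simp only [convR, mul_div_assoc', integral_div]

lemma exists_eLpNorm_lconvolution_etaKer_le {q P : ℝ} (hm : n < m) (hq : 1 ≤ q) (hqP : q ≤ P) :
    ∃ B : ℝ, 0 < B ∧ ∀ t : ℝ, 0 < t → ∀ f : Esp n → ℝ≥0∞, AEMeasurable f volume →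
      eLpNorm f (ENNReal.ofReal q) volume ≤ 1 →
      eLpNorm (f ⋆ₗ (‖etaKer n t m ·‖ₑ)) (ENNReal.ofReal P) volume ≤
        ENNReal.ofReal (B * t ^ (-(n : ℝ) * (1 / q - 1 / P))) := by
  have hP : 0 < P := one_pos.trans_le (hq.trans hqP)
  have hPq : 1 / P ≤ 1 / q := one_div_le_one_div_of_le (by positivity) hqP
  have hq1 : 1 / q ≤ 1 := (div_le_one (by positivity)).2 hq
  have hP0 : 0 < 1 / P := by positivity
  obtain ⟨s, hs, hsq⟩ : ∃ s : ℝ, 1 ≤ s ∧ 1 / s = 1 + 1 / P - 1 / q :=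
    ⟨(1 + 1 / P - 1 / q)⁻¹, (one_le_inv₀ (by linarith)).2 (by linarith), by simp⟩
  have hs0 : 0 < s := by positivity
  set A := eLpNorm (etaKer n 1 m) (ENNReal.ofReal s) volume
  have hm0 : 0 ≤ m := (Nat.cast_nonneg n).trans hm.le
  have hA : A ≠ ∞ :=
    (eLpNorm_etaKer_one_lt_top hs0 (hm.trans_le (le_mul_of_one_le_right hm0 hs))).ne
  refine ⟨A.toReal + 1, by positivity, fun t ht f hf hfq => ?_⟩
  calc eLpNorm (f ⋆ₗ (‖etaKer n t m ·‖ₑ)) (ENNReal.ofReal P) volume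
      ≤ eLpNorm f (ENNReal.ofReal q) volume *
          eLpNorm (‖etaKer n t m ·‖ₑ) (ENNReal.ofReal s) volume :=
        eLpNorm_lconvolution_le hf (by fun_prop) hq hs hP (by linarith)
    _ ≤ eLpNorm (etaKer n t m) (ENNReal.ofReal s) volume := by
        grw [hfq, one_mul, eLpNorm_enorm]
    _ = ENNReal.ofReal (A.toReal * t ^ (-(n : ℝ) * (1 / q - 1 / P))) := by
        rw [eLpNorm_etaKer ht hs0, mul_comm, ENNReal.ofReal_mul (by positivity),
          ENNReal.ofReal_toReal hA, hsq]
        congr 4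
        ring
    _ ≤ ENNReal.ofReal ((A.toReal + 1) * t ^ (-(n : ℝ) * (1 / q - 1 / P))) := by
        gcongr
        simp

lemma exists_eLpNorm_convR_etaKer_le {r : Esp n → ℝ} {rm rp P : ℝ} (hm : n < m)
    (hr : ∀ᵐ x, r x ∈ Set.Icc rm rp) (hrm : 1 ≤ rm) (hrp : rp ≤ P) :
    ∃ B : ℝ, 0 < B ∧ ∀ t : ℝ, 0 < t → ∀ f : Esp n → ℝ, AEMeasurable f volume →
      vMod n r f ≤ 1 →
      eLpNorm (convR n (etaKer n t m) f) (ENNReal.ofReal P) volume ≤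
        ENNReal.ofReal (B *
          max (t ^ (-(n : ℝ) * (1 / rm - 1 / P))) (t ^ (-(n : ℝ) * (1 / rp - 1 / P)))) := by
  obtain ⟨x₀, hx₀⟩ := hr.exists
  have hrmrp : rm ≤ rp := hx₀.1.trans hx₀.2
  have hrp1 : 1 ≤ rp := hrm.trans hrmrp
  have hrm0 : 0 < rm := by positivity
  have hrp0 : 0 < rp := by positivity
  obtain ⟨B₁, hB₁, h₁⟩ := exists_eLpNorm_lconvolution_etaKer_le hm hrm (hrmrp.trans hrp)
  obtain ⟨B₂, hB₂, h₂⟩ := exists_eLpNorm_lconvolution_etaKer_le hm hrp1 hrp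
  refine ⟨B₁ + B₂, by positivity, fun t ht f hf hfr => ?_⟩
  obtain ⟨f₁, f₂, hf₁, hf₂, hadd, hle₁, hle₂⟩ :=
    exists_add_eq_lintegral_rpow_le hf.enorm hrm0 hrp0 hr
  have hmod : ∫⁻ x, ‖f x‖ₑ ^ r x ≤ 1 := by simpa only [vMod, Real.enorm_eq_ofReal_abs] using hfr
  have hnorm₁ : eLpNorm f₁ (ENNReal.ofReal rm) volume ≤ 1 := by
    simpa [eLpNorm_ofReal_le_iff_lintegral_le hrm0] using hle₁.trans hmod
  have hnorm₂ : eLpNorm f₂ (ENNReal.ofReal rp) volume ≤ 1 := by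
    simpa [eLpNorm_ofReal_le_iff_lintegral_le hrp0] using hle₂.trans hmod
  have hη : AEMeasurable (‖etaKer n t m ·‖ₑ) volume := by fun_prop
  calc eLpNorm (convR n (etaKer n t m) f) (ENNReal.ofReal P) volume
      ≤ eLpNorm ((f₁ ⋆ₗ (‖etaKer n t m ·‖ₑ)) + (f₂ ⋆ₗ (‖etaKer n t m ·‖ₑ)))
          (ENNReal.ofReal P) volume := by
        rw [← add_lconvolution hf₁ hη, hadd]
        exact eLpNorm_mono_enorm fun x => enorm_convR_le _ f x
    _ ≤ eLpNorm (f₁ ⋆ₗ (‖etaKer n t m ·‖ₑ)) (ENNReal.ofReal P) volume +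
          eLpNorm (f₂ ⋆ₗ (‖etaKer n t m ·‖ₑ)) (ENNReal.ofReal P) volume :=
        eLpNorm_add_le (aemeasurable_lconvolution hf₁ hη).aestronglyMeasurable
          (aemeasurable_lconvolution hf₂ hη).aestronglyMeasurable
          (ENNReal.one_le_ofReal.2 (hrp1.trans hrp))
    _ ≤ ENNReal.ofReal (B₁ * t ^ (-(n : ℝ) * (1 / rm - 1 / P))) +
          ENNReal.ofReal (B₂ * t ^ (-(n : ℝ) * (1 / rp - 1 / P))) :=
        add_le_add (h₁ t ht f₁ hf₁ hnorm₁) (h₂ t ht f₂ hf₂ hnorm₂)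
    _ ≤ _ := by
        rw [← ENNReal.ofReal_add (by positivity) (by positivity), add_mul]
        gcongr
        exacts [le_max_left _ _, le_max_right _ _]

end Kernel

theorem statement13_general (n : ℕ) (m : ℝ) (hm : (n : ℝ) < m) (pexp r : Esp n → ℝ)
    (pinf rm rp c : ℝ) (hp : ∀ᵐ x, pexp x ∈ Set.Icc 1 pinf)
    (hdecay : ∀ᵐ x, 1 / pexp x - 1 / pinf ≤ c / log (exp 1 + ‖x‖))
    (hr : ∀ᵐ x, r x ∈ Set.Icc rm rp) (hrm : 1 ≤ rm) (hrple : rp ≤ pinf) :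
    ∃ C : ℝ, 0 < C ∧ ∀ t : ℝ, 0 < t → ∀ f : Esp n → ℝ, MemVLp n r f →
      luxNorm n pexp (convR n (etaKer n t m) f) ≤
        C * max (t ^ (-(n : ℝ) * (1 / rm - 1 / pinf))) (t ^ (-(n : ℝ) * (1 / rp - 1 / pinf))) *
          luxNorm n r f := by
  obtain ⟨B, hB, hconv⟩ := exists_eLpNorm_convR_etaKer_le hm hr hrm hrple
  obtain ⟨A, hA, hembed⟩ := exists_vMod_div_le_one_of_eLpNorm_le hp hdecay
  refine ⟨A * B, by positivity, fun t ht f hf => ?_⟩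
  set T := max (t ^ (-(n : ℝ) * (1 / rm - 1 / pinf))) (t ^ (-(n : ℝ) * (1 / rp - 1 / pinf)))
  have : 0 < T := lt_max_of_lt_left (by positivity)
  refine luxNorm_le_mul_luxNorm hf (by positivity) fun lam _ hmod => ?_
  calc vMod n pexp (fun x => convR n (etaKer n t m) f x / (A * B * T * lam))
      = vMod n pexp (fun x => convR n (etaKer n t m) (fun y => f y / lam) x / (A * (B * T))) := by
        congr 1 with x
        rw [convR_div_const, div_div]
        ring
    _ ≤ 1 := hembed _ _ (by positivity) (hconv t ht _ (hf.1.div_const lam) hmod)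

/-- Theorem 3.17(1) of the paper: for `p ∈ P^log` with `p⁺ = p_∞ < ∞` and a measurable
exponent `r` with `r⁺ ≤ p⁺`, `‖η_{t,m} * f‖_{L^{p(·)}} ≤ C t^{-nσ(t)} ‖f‖_{L^{r(·)}}`. -/
theorem statement13 (n : ℕ) (hn : 1 ≤ n) (m : ℝ) (hm : (n : ℝ) < m)
    (pexp : Esp n → ℝ) (hpmeas : Measurable pexp) (hp1 : ∀ x, 1 ≤ pexp x)
    (r : Esp n → ℝ) (hrmeas : Measurable r) (hr1 : ∀ x, 1 ≤ r x)
    (pinf rm rp : ℝ) (hpinf : pinf = essSup pexp volume)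
    (hrm : rm = essInf r volume) (hrp : rp = essSup r volume)
    (hpbdd : IsBoundedUnder (· ≤ ·) (ae (volume : Measure (Esp n))) pexp)
    (hrbdd : IsBoundedUnder (· ≤ ·) (ae (volume : Measure (Esp n))) r)
    (hlog : IsLogHolder n pexp (1 / pinf))
    (hrple : rp ≤ pinf) :
    ∃ C : ℝ, 0 < C ∧ ∀ t : ℝ, 0 < t → ∀ f : Esp n → ℝ,
      MemVLp n r f →
      luxNorm n pexp (convR n (etaKer n t m) f) ≤
        C * t ^ (-(n : ℝ) *
          (if t ≤ 1 then
            (1 / rm - 1 / pinf) *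
              (1 + (1 / pinf) * ((1 / rm - 1 / rp) /
                ((1 + 1 / pinf - 1 / rm) * (1 + 1 / pinf - 1 / rp))))
          else
            (1 / rp - 1 / pinf) *
              (1 - (1 / pinf) * ((1 / rm - 1 / rp) /
                ((1 + 1 / pinf - 1 / rm) * (1 + 1 / pinf - 1 / rp)))))) *
        luxNorm n r f := by
  obtain ⟨c, -, -, hdecay⟩ := hlog
  have hp : ∀ᵐ x, pexp x ∈ Set.Icc 1 pinf := by
    filter_upwards [ae_le_essSup hpbdd] with x hx using ⟨hp1 x, hpinf ▸ hx⟩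
  have hr : ∀ᵐ x, r x ∈ Set.Icc rm rp :=
    hrm ▸ hrp ▸ ae_mem_Icc_essInf_essSup (isBoundedUnder_of ⟨1, hr1⟩) hrbdd
  have hrm1 : 1 ≤ rm := hrm ▸ le_essInf_of_isBoundedUnder (.of_forall hr1) hrbdd
  obtain ⟨C, hC, hbound⟩ := statement13_general n m hm pexp r pinf rm rp c hp
    (.of_forall fun x => (le_abs_self _).trans (hdecay x)) hr hrm1 hrple
  refine ⟨C, hC, fun t ht f hf => (hbound t ht f hf).trans ?_⟩
  obtain ⟨x₀, hx₀⟩ := hr.exists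
  have hrmrp : rm ≤ rp := hx₀.1.trans hx₀.2
  have hrp1 : 1 ≤ rp := hrm1.trans hrmrp
  have hpinf1 : 1 ≤ pinf := hrp1.trans hrple
  gcongr
  · exact luxNorm_nonneg
  · exact max_rpow_le_rpow_ite_correction ht n.cast_nonneg (by positivity)
      (by gcongr) (by gcongr) ((div_le_one (by positivity)).2 hrm1)
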